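/- Let δ ∈ (0,1), c > 0, let M ≥ 2 be a natural number, and let R be any real number (the fixed discounted revenue). Then the profit function ξ ↦ R − c·∑_{n=0}^{M−1} δ^(n/(1+ξ))·(1+ξ)^n is strictly decreasing on [0, ∞). In particular, on any interval of penalty parameters over which the required number of attacker blocks ⌈N·(1+ξ)⌉ is constant, the attacker's ex-ante expected profit is strictly decreasing in the penalty parameter ξ. -/

import Mathlib

open Finset

section DiscountedGrowth

variable {δ x : ℝ}

lemma monotoneOn_rpow_div (hδ0 : 0 ≤ δ) (hδ1 : δ ≤ 1) (hx : 0 ≤ x) :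
    MonotoneOn (fun g : ℝ => δ ^ (x / g)) (Set.Ioi 0) := fun _ ha _ hb hab =>
  Real.rpow_le_rpow_of_exponent_ge' hδ0 hδ1 (div_nonneg hx (le_of_lt hb))
    (div_le_div_of_nonneg_left hx ha hab)

lemma monotoneOn_rpow_div_mul_pow (hδ0 : 0 ≤ δ) (hδ1 : δ ≤ 1) (hx : 0 ≤ x) (n : ℕ) :
    MonotoneOn (fun g : ℝ => δ ^ (x / g) * g ^ n) (Set.Ioi 0) :=
  (monotoneOn_rpow_div hδ0 hδ1 hx).mul (pow_left_monotoneOn.mono Set.Ioi_subset_Ici_self)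
    (fun _ _ => Real.rpow_nonneg hδ0 _) (fun _ hg => pow_nonneg (le_of_lt hg) n)

lemma strictMonoOn_rpow_div_mul_pow (hδ0 : 0 < δ) (hδ1 : δ ≤ 1) (hx : 0 ≤ x) {n : ℕ}
    (hn : n ≠ 0) :
    StrictMonoOn (fun g : ℝ => δ ^ (x / g) * g ^ n) (Set.Ioi 0) := fun _ ha _ hb hab =>
  mul_lt_mul' (monotoneOn_rpow_div hδ0.le hδ1 hx ha hb hab.le)
    (pow_lt_pow_left₀ hab (le_of_lt ha) hn) (pow_nonneg (le_of_lt ha) n)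
    (Real.rpow_pos_of_pos hδ0 _)

lemma strictMonoOn_sum_rpow_div_mul_pow (hδ0 : 0 < δ) (hδ1 : δ ≤ 1) {s : Finset ℕ}
    (hs : ∃ n ∈ s, n ≠ 0) :
    StrictMonoOn (fun g : ℝ => ∑ n ∈ s, δ ^ ((n : ℝ) / g) * g ^ n) (Set.Ioi 0) := by
  intro a ha b hb hab
  obtain ⟨n, hns, hn⟩ := hs
  exact sum_lt_sum
    (fun k _ => monotoneOn_rpow_div_mul_pow hδ0.le hδ1 k.cast_nonneg k ha hb hab.le)
    ⟨n, hns, strictMonoOn_rpow_div_mul_pow hδ0 hδ1 n.cast_nonneg hn ha hb hab⟩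

end DiscountedGrowth

theorem adess_profit_strictAnti_on_fixed_blocks_general
    {δ c : ℝ} (R : ℝ) {M : ℕ} (hδ0 : 0 < δ) (hδ1 : δ ≤ 1) (hc : 0 < c) (hM : 2 ≤ M) :
    StrictAntiOn
      (fun ξ : ℝ => R - c * ∑ n ∈ range M, δ ^ ((n : ℝ) / (1 + ξ)) * (1 + ξ) ^ n)
      (Set.Ioi (-1)) := by
  intro a ha b hb hab
  have one_add_pos {ξ : ℝ} (hξ : ξ ∈ Set.Ioi (-1)) : 1 + ξ ∈ Set.Ioi 0 :=
    neg_lt_iff_pos_add'.mp hξ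
  have block_one_mem : ∃ n ∈ range M, n ≠ 0 := ⟨1, mem_range.mpr hM, one_ne_zero⟩
  have cost_lt := strictMonoOn_sum_rpow_div_mul_pow hδ0 hδ1 block_one_mem
    (one_add_pos ha) (one_add_pos hb) (add_lt_add_right hab 1)
  exact sub_lt_sub_left (mul_lt_mul_of_pos_left cost_lt hc) R

theorem adess_profit_strictAnti_on_fixed_blocks
    (δ c R : ℝ) (M : ℕ)
    (hδ0 : 0 < δ) (hδ1 : δ < 1) (hc : 0 < c) (hM : 2 ≤ M) :
    StrictAntiOn
      (fun ξ : ℝ =>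
        R - c * ∑ n ∈ Finset.range M, δ ^ ((n : ℝ) / (1 + ξ)) * (1 + ξ) ^ n)
      (Set.Ici (0 : ℝ)) :=
  (adess_profit_strictAnti_on_fixed_blocks_general R hδ0 hδ1.le hc hM).mono
    (Set.Ici_subset_Ioi.mpr neg_one_lt_zero)
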